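/- If A and B are n×n complex matrices with A·A* = w₁·I, B·B* = w₂·I, A·B = B·A, and additionally A·B* = B*·A (which follows when A, B are ζ-circulant), then the 2n×2n block matrix [[A, B], [−B*, A*]] satisfies W·W* = (w₁+w₂)·I₂ₙ, provided A·Bᴴ = B·Aᴴ. -/

import Mathlib

/-!
The off-diagonal blocks of `W * Wᴴ` cancel because `A * B = B * A`, leaving
`A * Aᴴ + B * Bᴴ` and `Bᴴ * B + Aᴴ * A` on the diagonal. The two agree because `A` and `B` are
normal: if `A` commutes with `A * Aᴴ`, then cyclicity of the trace gives `trace (D * D) = 0` for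
`D = Aᴴ * A - A * Aᴴ`, and `D` is Hermitian, so `D = 0`. This avoids inverting `w₁` and `w₂`,
which may vanish.
-/

open Matrix
open scoped ComplexOrder

variable {n R S : Type*} [Fintype n]

theorem trace_conjTranspose_commutator_mul_self_eq_zero [NonUnitalCommRing R] [StarRing R]
    {A : Matrix n n R} (hA : Commute (A * Aᴴ) A) :
    trace ((Aᴴ * A - A * Aᴴ) * (Aᴴ * A - A * Aᴴ)) = 0 := by
  have commute_star : Commute (A * Aᴴ) Aᴴ := by
    simpa [star_eq_conjTranspose] using hA.star_star
  have expand : (Aᴴ * A - A * Aᴴ) * (Aᴴ * A - A * Aᴴ) =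
      A * Aᴴ * (A * Aᴴ) - A * Aᴴ * Aᴴ * A := by
    have square : Aᴴ * A * (Aᴴ * A) = A * Aᴴ * Aᴴ * A := by
      rw [commute_star.eq]
      simp only [Matrix.mul_assoc]
    have cross : Aᴴ * A * (A * Aᴴ) = A * Aᴴ * Aᴴ * A := by
      rw [← (commute_star.mul_right hA).eq]
      simp only [Matrix.mul_assoc]
    rw [sub_mul, mul_sub, mul_sub, square, cross, ← Matrix.mul_assoc (A * Aᴴ) Aᴴ A]
    abel
  have cyclic : trace (A * Aᴴ * Aᴴ * A) = trace (A * Aᴴ * (A * Aᴴ)) := by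
    rw [trace_mul_comm, ← Matrix.mul_assoc, ← hA.eq, Matrix.mul_assoc]
  rw [expand, trace_sub, cyclic, sub_self]

theorem isStarNormal_of_commute_self_mul_conjTranspose [NonUnitalCommRing R] [PartialOrder R]
    [StarRing R] [StarOrderedRing R] [NoZeroDivisors R] {A : Matrix n n R}
    (hA : Commute (A * Aᴴ) A) : IsStarNormal A := by
  have hermitian : (Aᴴ * A - A * Aᴴ).IsHermitian :=
    (isHermitian_conjTranspose_mul_self A).sub (isHermitian_mul_conjTranspose_self A)
  have trace_sq := trace_conjTranspose_commutator_mul_self_eq_zero hA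
  nth_rewrite 2 [← hermitian.eq] at trace_sq
  exact ⟨sub_eq_zero.mp (trace_mul_conjTranspose_self_eq_zero_iff.mp trace_sq)⟩

theorem conjTranspose_mul_self_eq_smul_one [DecidableEq n] [CommRing R] [PartialOrder R]
    [StarRing R] [StarOrderedRing R] [NoZeroDivisors R] [CommSemiring S] [Algebra S R]
    {A : Matrix n n R} {w : S} (hA : A * Aᴴ = w • 1) : Aᴴ * A = w • 1 := by
  have hcomm : Commute (A * Aᴴ) A := hA ▸ (Commute.one_left A).smul_left w
  exact (isStarNormal_of_commute_self_mul_conjTranspose hcomm).star_comm_self.eq.trans hA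

theorem fromBlocks_neg_conjTranspose_mul_conjTranspose_of_commute [NonUnitalRing R] [StarRing R]
    {A B : Matrix n n R} (hAB : Commute A B) :
    fromBlocks A B (-Bᴴ) Aᴴ * (fromBlocks A B (-Bᴴ) Aᴴ)ᴴ =
      fromBlocks (A * Aᴴ + B * Bᴴ) 0 0 (Bᴴ * B + Aᴴ * A) := by
  have hAB' : Aᴴ * Bᴴ = Bᴴ * Aᴴ := hAB.star_star.eq
  simp [fromBlocks_conjTranspose, fromBlocks_multiply, hAB.eq, hAB']

theorem stmt_11_general [DecidableEq n] [CommRing R] [PartialOrder R] [StarRing R]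
    [StarOrderedRing R] [NoZeroDivisors R] [CommSemiring S] [Algebra S R]
    {A B : Matrix n n R} {w₁ w₂ : S} (hA : A * Aᴴ = w₁ • 1) (hB : B * Bᴴ = w₂ • 1)
    (hAB : A * B = B * A) :
    fromBlocks A B (-Bᴴ) Aᴴ * (fromBlocks A B (-Bᴴ) Aᴴ)ᴴ = (w₁ + w₂) • 1 := by
  rw [fromBlocks_neg_conjTranspose_mul_conjTranspose_of_commute hAB, hA, hB,
    conjTranspose_mul_self_eq_smul_one hA, conjTranspose_mul_self_eq_smul_one hB,
    add_comm (w₂ • 1), ← add_smul, ← fromBlocks_one, fromBlocks_smul, smul_zero]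

theorem stmt_11 (n : ℕ) (A B : Matrix (Fin n) (Fin n) ℂ) (w₁ w₂ : ℝ)
    (hA : A * A.conjTranspose = w₁ • 1) (hB : B * B.conjTranspose = w₂ • 1)
    (hAB : A * B = B * A)
    (hcomm : A * B.conjTranspose = B * A.conjTranspose)
    (hcomm2 : A.conjTranspose * B = B * A.conjTranspose) :
    (Matrix.fromBlocks A B (-B.conjTranspose) A.conjTranspose) *
      (Matrix.fromBlocks A B (-B.conjTranspose) A.conjTranspose).conjTranspose
      = (w₁ + w₂) • 1 :=
  stmt_11_general hA hB hAB
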